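/- arXiv:1402.3573 — 2 statements merged into one kernel-verified Lean document; each statement's English description precedes it below -/
import Mathlib

section
/- Let G be a finite simple graph and T a tree 3-spanner of G. Suppose u lies on the path in T between vertices p and q, and neither p nor q belongs to the closed T-neighborhood of u. Then every path from p to q in G contains a vertex in the closed T-neighborhood of u. -/
theorem aux_two {V : Type*} (T : SimpleGraph V) (u x : V) (W : T.Walk u x)
    (h : ¬ (x = u ∨ T.Adj u x)) : 2 ≤ W.length := by
  by_contra hc
  apply h
  cases W with
  | nil => exact Or.inl rfl
  | cons h1 W' =>
    cases W' with
    | nil => exact Or.inr h1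
    | cons h2 W'' => simp at hc

theorem aux_walk {V : Type*} (G T : SimpleGraph V) (hT : T.IsTree)
    (hspan : ∀ x y : V, T.dist x y ≤ 3 * G.dist x y) (u : V) {a b : V} (P : G.Walk a b)
    (h : ∀ w ∈ P.support, ¬ (w = u ∨ T.Adj u w)) : ∃ W : T.Walk a b, u ∉ W.support := by
  classical
  induction P with
  | nil =>
    refine ⟨SimpleGraph.Walk.nil, ?_⟩
    intro hm
    simp at hm
    exact h _ (by simp) (Or.inl hm.symm)
  | @cons x y z hxy P ih =>
    obtain ⟨W, hW⟩ := ih (fun w hw => h w (by simp [hw]))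
    obtain ⟨E, hE⟩ := hT.1.exists_walk_length_eq_dist x y
    refine ⟨E.append W, ?_⟩
    rw [SimpleGraph.Walk.mem_support_append_iff]
    rintro (hm | hm)
    · have h3 := hspan x y
      rw [SimpleGraph.dist_eq_one_iff_adj.mpr hxy] at h3
      have h1 := aux_two T u x (E.takeUntil u hm).reverse (h x (by simp))
      have h2 := aux_two T u y (E.dropUntil u hm) (h y (by simp))
      have h4 := congrArg SimpleGraph.Walk.length (E.take_spec hm)
      rw [SimpleGraph.Walk.length_append] at h4
      rw [SimpleGraph.Walk.length_reverse] at h1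
      omega
    · exact hW hm

/-- If `u` lies on the `T`-path between `p` and `q` and neither `p` nor `q` is in `N_T[u]`,
then every path from `p` to `q` in `G` contains a vertex of `N_T[u]`. -/
theorem stmt_2 {V : Type*} [Fintype V] (G T : SimpleGraph V)
    (hle : T ≤ G) (hT : T.IsTree)
    (hspan : ∀ x y : V, T.dist x y ≤ 3 * G.dist x y)
    (p q u : V)
    (hu : T.dist p u + T.dist u q = T.dist p q)
    (hp : p ≠ u ∧ ¬ T.Adj u p) (hq : q ≠ u ∧ ¬ T.Adj u q) :
    ∀ P : G.Walk p q, P.IsPath → ∃ w ∈ P.support, w = u ∨ T.Adj u w := by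
  classical
  intro P _
  by_contra hc
  obtain ⟨W, hW⟩ := aux_walk G T hT hspan u P (fun w hw h => hc ⟨w, hw, h⟩)
  obtain ⟨A, hA⟩ := hT.1.exists_walk_length_eq_dist p u
  obtain ⟨B, hB⟩ := hT.1.exists_walk_length_eq_dist u q
  have hAB : (A.append B).IsPath := by
    apply SimpleGraph.Walk.isPath_of_length_eq_dist
    rw [SimpleGraph.Walk.length_append]
    omega
  have he := hT.2.path_unique ⟨_, hAB⟩ ⟨_, W.bypass_isPath⟩
  have he' : A.append B = W.bypass := congrArg Subtype.val he
  apply hW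
  apply W.support_bypass_subset
  rw [← he', SimpleGraph.Walk.mem_support_append_iff]
  exact Or.inl A.end_mem_support
end

section
/- Let G be a finite simple graph, uv an edge of G, and T a tree 3-spanner of G with 5-center {u,v}. Then every connected component Q of G \ N_G[u,v] is placed entirely on one side of the edge uv in T: either every vertex of Q is strictly closer in T to u than to v, or every vertex of Q is strictly closer in T to v than to u. -/
theorem side_aux {V : Type*} {T : SimpleGraph V} (hc : T.Connected) {u v x z : V}
    (h : T.dist u x < T.dist v x) (p : T.Walk x u) (hp : p.length = T.dist x u)
    (hz : z ∈ p.support) : T.dist u z < T.dist v z := by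
  classical
  have h1 := congrArg SimpleGraph.Walk.length (p.take_spec hz)
  rw [SimpleGraph.Walk.length_append] at h1
  have h2 := SimpleGraph.dist_le (p.takeUntil z hz)
  have h3 := SimpleGraph.dist_le (p.dropUntil z hz)
  have h4 := hc.dist_triangle (u := v) (v := z) (w := x)
  rw [T.dist_comm (u := z) (v := x)] at h4
  rw [T.dist_comm (u := z) (v := u)] at h3
  rw [T.dist_comm (u := x) (v := u)] at hp
  omega

theorem cross_aux {V : Type*} {T : SimpleGraph V} (hT : T.IsTree) {u v x y : V}
    (hadj : T.Adj u v) (hx : T.dist u x < T.dist v x) (hy : T.dist v y < T.dist u y) :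
    T.dist x y = T.dist u x + 1 + T.dist v y := by
  have hc := hT.connected
  obtain ⟨p, hp, hpl⟩ := hc.exists_path_of_dist x u
  obtain ⟨r, hr, hrl⟩ := hc.exists_path_of_dist v y
  obtain ⟨q, hq, hql⟩ := hc.exists_path_of_dist x y
  have hpath : (p.append (SimpleGraph.Walk.cons hadj r)).IsPath := by
    rw [SimpleGraph.Walk.isPath_def, SimpleGraph.Walk.support_append,
      SimpleGraph.Walk.support_cons, List.tail_cons, List.nodup_append']
    refine ⟨hp.support_nodup, hr.support_nodup, ?_⟩
    intro z hz1 hz2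
    have a := side_aux hc hx p hpl hz1
    have b := side_aux hc hy r.reverse (by
      rw [SimpleGraph.Walk.length_reverse, hrl, T.dist_comm]) (z := z) (by simpa using hz2)
    omega
  have he := hT.existsUnique_path x y
  have := he.unique hq hpath
  rw [← hql, this, SimpleGraph.Walk.length_append, SimpleGraph.Walk.length_cons, hpl, hrl,
    T.dist_comm (u := x)]
  omega

/-- Every component of `G \ N_G[u,v]` lies entirely on one side of the central edge `uv`
of a tree 3-spanner `T` with 5-center `{u,v}`. -/
theorem stmt_6 {V : Type*} [Fintype V] (G T : SimpleGraph V) (u v : V)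
    (huv : G.Adj u v) (hle : T ≤ G) (hT : T.IsTree)
    (hspan : ∀ x y : V, T.dist x y ≤ 3 * G.dist x y)
    (hadj : T.Adj u v)
    (hcenter : ∀ w : V, T.dist u w ≤ 2 ∨ T.dist v w ≤ 2)
    (S : Set V) (hS : S = {w | ¬ (w = u ∨ w = v ∨ G.Adj u w ∨ G.Adj v w)})
    (Q : (G.induce S).ConnectedComponent) :
    (∀ w : S, (G.induce S).connectedComponentMk w = Q → T.dist u ↑w < T.dist v ↑w) ∨
    (∀ w : S, (G.induce S).connectedComponentMk w = Q → T.dist v ↑w < T.dist u ↑w) := by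
  have hc := hT.connected
  have far : ∀ w : S, 2 ≤ T.dist u w ∧ 2 ≤ T.dist v w := by
    rintro ⟨w, hw⟩
    rw [hS] at hw
    simp only [Set.mem_setOf_eq, not_or] at hw
    obtain ⟨h1, h2, h3, h4⟩ := hw
    have key : ∀ a : V, w ≠ a → ¬ G.Adj a w → 2 ≤ T.dist a w := by
      intro a ha hn
      have e0 : T.dist a w ≠ 0 := fun h => ha ((hc.dist_eq_zero_iff).1 h).symm
      have e1 : T.dist a w ≠ 1 := fun h => hn (hle (SimpleGraph.dist_eq_one_iff_adj.1 h))
      omega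
    exact ⟨key u h1 h3, key v h2 h4⟩
  have dich : ∀ w : V, T.dist u w < T.dist v w ∨ T.dist v w < T.dist u w := by
    intro w
    have := hT.dist_ne_of_adj w hadj
    rw [T.dist_comm (u := w), T.dist_comm (u := w)] at this
    omega
  have step : ∀ x y : S, (G.induce S).Adj x y → T.dist u x < T.dist v x →
      T.dist u y < T.dist v y := by
    intro x y hxy hx
    rcases dich y with h | h
    · exact h
    · exfalso
      have h1 := cross_aux hT hadj hx h
      have h2 := hspan x y
      have h3 : G.dist (x : V) y = 1 := SimpleGraph.dist_eq_one_iff_adj.2 hxy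
      have := far x
      have := far y
      omega
  have walk : ∀ x y : S, (G.induce S).Walk x y → T.dist u x < T.dist v x →
      T.dist u y < T.dist v y := by
    intro x y p
    induction p with
    | nil => exact id
    | cons h _ ih => exact fun hx => ih (step _ _ h hx)
  by_cases hq : ∃ w : S, (G.induce S).connectedComponentMk w = Q ∧ T.dist u w < T.dist v w
  · obtain ⟨w, hw, hlt⟩ := hq
    left
    intro y hy
    obtain ⟨p⟩ := SimpleGraph.ConnectedComponent.exact (hw.trans hy.symm)
    exact walk w y p hlt
  · right
    intro y hy
    exact (dich y).resolve_left fun h => hq ⟨y, hy, h⟩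
end
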